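/- Work in M₂(ℂ[z, z⁻¹]). Define i_{α_1} to be the identity map on 2×2 complex matrices (viewed as constant Laurent-polynomial matrices), and define i_{α_0}((a, b; c, d)) = (d, c·z⁻¹; b·z, a). For j ≥ 1 set γ_j = α_0 if j is odd and γ_j = α_1 if j is even, set r_j = i_{γ_j}((0, i; i, 0)), and set w_0 = I, w_k = r_k · r_{k−1} ⋯ r_1 for k ≥ 1 (each r_j has determinant 1, so w_k is invertible). Then for every j ≥ 1 and every ζ ∈ ℂ: w_{j−1}^{−1} · i_{γ_j}((1, −conj(ζ); ζ, 1)) · w_{j−1} = (1, ζ·z^{−j}; −conj(ζ)·z^{j}, 1). -/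

import Mathlib

/-!
Conjugation by `(0, i; i, 0)`, placed in the copy of `M₂(ℂ)` whose off-diagonal entries carry `z^m`
and `z^{-m}`, exchanges the two diagonal and the two off-diagonal entries and reflects the degree
`n` of the upper-right entry to `2m - n`. The odd `r_j` give the reflection in `-1` and the even
`r_j` the reflection in `0`, so `w_{2k}` acts as the translation `n ↦ n - 2k`. As `i_{α₁}` starts at
degree `0` and `i_{α₀}` at degree `-1`, conjugating `i_{γ_j}` by `w_{j-1}` ends at degree `-j`.
-/

open Matrix

/-- `i_{α₁}`: the inclusion of constant matrices into matrices over Laurent series. -/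
noncomputable def ia1 (g : Matrix (Fin 2) (Fin 2) ℂ) :
    Matrix (Fin 2) (Fin 2) (LaurentSeries ℂ) :=
  g.map (fun c => HahnSeries.single (0 : ℤ) c)

/-- `i_{α₀}((a, b; c, d)) = (d, c z⁻¹; b z, a)`. -/
noncomputable def ia0 (g : Matrix (Fin 2) (Fin 2) ℂ) :
    Matrix (Fin 2) (Fin 2) (LaurentSeries ℂ) :=
  !![HahnSeries.single (0 : ℤ) (g 1 1), HahnSeries.single (-1 : ℤ) (g 1 0);
     HahnSeries.single (1 : ℤ) (g 0 1), HahnSeries.single (0 : ℤ) (g 0 0)]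

/-- `i_{γ_j}`: `i_{α₀}` for odd `j` and `i_{α₁}` for even `j`. -/
noncomputable def igam (j : ℕ) :
    Matrix (Fin 2) (Fin 2) ℂ → Matrix (Fin 2) (Fin 2) (LaurentSeries ℂ) :=
  if j % 2 = 1 then ia0 else ia1

/-- `r_j = i_{γ_j}((0, i; i, 0))`. -/
noncomputable def rmat (j : ℕ) : Matrix (Fin 2) (Fin 2) (LaurentSeries ℂ) :=
  igam j !![0, Complex.I; Complex.I, 0]

/-- `w_0 = I`, `w_k = r_k ⋯ r_1`. -/
noncomputable def wmat : ℕ → Matrix (Fin 2) (Fin 2) (LaurentSeries ℂ)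
  | 0 => 1
  | k + 1 => rmat (k + 1) * wmat k

section AffineRootEmbedding

variable {R : Type*}

/-- The embedding of `M₂(R)` attached to the affine real root `α + nδ`, sending `(a, b; c, d)` to
`(a, b zⁿ; c z⁻ⁿ, d)`. The root `-α + nδ` corresponds to `affineRootEmbedding (-n) ∘ weylConj`. -/
noncomputable def affineRootEmbedding [Zero R] (n : ℤ) (g : Matrix (Fin 2) (Fin 2) R) :
    Matrix (Fin 2) (Fin 2) (LaurentSeries R) :=
  !![HahnSeries.single 0 (g 0 0), HahnSeries.single n (g 0 1);
     HahnSeries.single (-n) (g 1 0), HahnSeries.single 0 (g 1 1)]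

/-- Conjugation by the representative `(0, i; i, 0)` of the nontrivial Weyl group element, written
out in entries so that it makes sense over any `R`. -/
def weylConj (g : Matrix (Fin 2) (Fin 2) R) : Matrix (Fin 2) (Fin 2) R :=
  !![g 1 1, g 1 0; g 0 1, g 0 0]

theorem weylConj_weylConj (g : Matrix (Fin 2) (Fin 2) R) : weylConj (weylConj g) = g :=
  (Matrix.eta_fin_two g).symm

theorem det_affineRootEmbedding [CommRing R] (n : ℤ) (g : Matrix (Fin 2) (Fin 2) R) :
    (affineRootEmbedding n g).det = HahnSeries.single 0 g.det := by
  rw [affineRootEmbedding, det_fin_two_of, det_fin_two, HahnSeries.single_mul_single,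
    HahnSeries.single_mul_single, add_zero, add_neg_cancel, HahnSeries.single_sub]

theorem affineRootEmbedding_mul_antidiagonal [CommSemiring R] (n m : ℤ) (u : R)
    (g : Matrix (Fin 2) (Fin 2) R) :
    affineRootEmbedding n g * affineRootEmbedding m !![0, u; u, 0] =
      affineRootEmbedding m !![0, u; u, 0] * affineRootEmbedding (2 * m - n) (weylConj g) := by
  have upper : m + (n - 2 * m) = n + -m := by ring
  have lower : -m + (2 * m - n) = -n + m := by ring
  simp [affineRootEmbedding, weylConj, -HahnSeries.single_zero_mul_eq_smul,
    HahnSeries.single_mul_single, mul_comm u, upper, lower]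

end AffineRootEmbedding

theorem igam_odd (m : ℕ) (g : Matrix (Fin 2) (Fin 2) ℂ) :
    igam (2 * m + 1) g = affineRootEmbedding (-1) (weylConj g) := by
  have odd : (2 * m + 1) % 2 = 1 := by lia
  rw [igam, if_pos odd]
  rfl

theorem igam_even (m : ℕ) (g : Matrix (Fin 2) (Fin 2) ℂ) :
    igam (2 * m) g = affineRootEmbedding 0 g := by
  have even : ¬ 2 * m % 2 = 1 := by lia
  rw [igam, if_neg even]
  exact Matrix.eta_fin_two _

theorem rmat_odd (m : ℕ) :
    rmat (2 * m + 1) = affineRootEmbedding (-1) !![0, Complex.I; Complex.I, 0] :=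
  igam_odd m _

theorem rmat_even (m : ℕ) :
    rmat (2 * m) = affineRootEmbedding 0 !![0, Complex.I; Complex.I, 0] :=
  igam_even m _

theorem det_rmat (j : ℕ) : (rmat j).det = 1 := by
  have det_weyl : (!![0, Complex.I; Complex.I, 0] : Matrix (Fin 2) (Fin 2) ℂ).det = 1 := by
    simp
  obtain ⟨m, rfl | rfl⟩ := j.even_or_odd'
  · rw [rmat_even, det_affineRootEmbedding, det_weyl, HahnSeries.single_zero_one]
  · rw [rmat_odd, det_affineRootEmbedding, det_weyl, HahnSeries.single_zero_one]

theorem det_wmat (k : ℕ) : (wmat k).det = 1 := by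
  induction k with
  | zero => exact det_one
  | succ k ih => rw [wmat, det_mul, det_rmat, ih, one_mul]

theorem affineRootEmbedding_mul_rmat_odd (n : ℤ) (m : ℕ) (g : Matrix (Fin 2) (Fin 2) ℂ) :
    affineRootEmbedding n g * rmat (2 * m + 1) =
      rmat (2 * m + 1) * affineRootEmbedding (-2 - n) (weylConj g) := by
  rw [rmat_odd]
  exact affineRootEmbedding_mul_antidiagonal n (-1) Complex.I g

theorem affineRootEmbedding_mul_rmat_even (n : ℤ) (m : ℕ) (g : Matrix (Fin 2) (Fin 2) ℂ) :
    affineRootEmbedding n g * rmat (2 * m) =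
      rmat (2 * m) * affineRootEmbedding (-n) (weylConj g) := by
  rw [rmat_even, affineRootEmbedding_mul_antidiagonal, mul_zero, zero_sub]

theorem affineRootEmbedding_mul_wmat_even (n : ℤ) (m : ℕ) (g : Matrix (Fin 2) (Fin 2) ℂ) :
    affineRootEmbedding n g * wmat (2 * m) =
      wmat (2 * m) * affineRootEmbedding (n - 2 * m) g := by
  induction m generalizing n with
  | zero => simp [wmat]
  | succ m ih =>
    have wmat_succ : wmat (2 * (m + 1)) = rmat (2 * (m + 1)) * (rmat (2 * m + 1) * wmat (2 * m)) :=
      rfl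
    have degree : -2 - -n - 2 * (m : ℤ) = n - 2 * ((m + 1 : ℕ) : ℤ) := by push_cast; ring
    calc affineRootEmbedding n g * wmat (2 * (m + 1))
        = rmat (2 * (m + 1)) * (affineRootEmbedding (-n) (weylConj g) * rmat (2 * m + 1)) *
            wmat (2 * m) := by
          rw [wmat_succ, ← Matrix.mul_assoc, affineRootEmbedding_mul_rmat_even]
          simp only [Matrix.mul_assoc]
      _ = rmat (2 * (m + 1)) * (rmat (2 * m + 1) *
            (affineRootEmbedding (-2 - -n) g * wmat (2 * m))) := by
          rw [affineRootEmbedding_mul_rmat_odd, weylConj_weylConj]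
          simp only [Matrix.mul_assoc]
      _ = wmat (2 * (m + 1)) * affineRootEmbedding (n - 2 * ((m + 1 : ℕ) : ℤ)) g := by
          rw [ih, degree, wmat_succ]
          simp only [Matrix.mul_assoc]

theorem affineRootEmbedding_mul_wmat_odd (n : ℤ) (m : ℕ) (g : Matrix (Fin 2) (Fin 2) ℂ) :
    affineRootEmbedding n g * wmat (2 * m + 1) =
      wmat (2 * m + 1) * affineRootEmbedding (-2 - n - 2 * m) (weylConj g) := by
  rw [wmat, ← Matrix.mul_assoc, affineRootEmbedding_mul_rmat_odd, Matrix.mul_assoc,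
    affineRootEmbedding_mul_wmat_even, Matrix.mul_assoc]

theorem igam_succ_mul_wmat (k : ℕ) (g : Matrix (Fin 2) (Fin 2) ℂ) :
    igam (k + 1) g * wmat k =
      wmat k * affineRootEmbedding (-((k + 1 : ℕ) : ℤ)) (weylConj g) := by
  obtain ⟨m, rfl | rfl⟩ := k.even_or_odd'
  · have degree : -1 - 2 * (m : ℤ) = -((2 * m + 1 : ℕ) : ℤ) := by push_cast; ring
    rw [igam_odd, affineRootEmbedding_mul_wmat_even, degree]
  · have degree : -2 - 0 - 2 * (m : ℤ) = -((2 * m + 1 + 1 : ℕ) : ℤ) := by push_cast; ring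
    have index : 2 * m + 1 + 1 = 2 * (m + 1) := by ring
    rw [← degree, index, igam_even, affineRootEmbedding_mul_wmat_odd]

theorem stmt4_general (j : ℕ) (hj : 1 ≤ j) (g : Matrix (Fin 2) (Fin 2) ℂ) :
    (wmat (j - 1))⁻¹ * igam j g * wmat (j - 1) =
      affineRootEmbedding (-(j : ℤ)) (weylConj g) := by
  have det_unit : IsUnit (wmat (j - 1)).det := det_wmat (j - 1) ▸ isUnit_one
  have intertwining := igam_succ_mul_wmat (j - 1) g
  rw [Nat.sub_add_cancel hj] at intertwining
  rw [Matrix.mul_assoc, intertwining, nonsing_inv_mul_cancel_left _ _ det_unit]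

/-- For every `j ≥ 1` and `ζ ∈ ℂ`:
`w_{j-1}⁻¹ · i_{γ_j}((1, −conj ζ; ζ, 1)) · w_{j-1} = (1, ζ z^{-j}; −conj(ζ) z^{j}, 1)`. -/
theorem stmt4 (j : ℕ) (hj : 1 ≤ j) (ζ : ℂ) :
    (wmat (j - 1))⁻¹ * igam j !![1, -(starRingEnd ℂ ζ); ζ, 1] * wmat (j - 1)
      = !![1, HahnSeries.single (-(j : ℤ)) ζ;
           HahnSeries.single ((j : ℤ)) (-(starRingEnd ℂ ζ)), 1] :=
  (stmt4_general j hj _).trans (by simp [affineRootEmbedding, weylConj])
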